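/- arXiv:2210.08597 — 5 statements merged into one kernel-verified Lean document; each statement's English description precedes it below -/
import Mathlib

section
/- For all u, v in the open unit disk of ℝ² (‖u‖ < 1 and ‖v‖ < 1), one has (1 − ⟨u,v⟩)² ≥ (1 − ‖u‖²)(1 − ‖v‖²), with equality if and only if u = v. (Well-definedness of the Klein-model distance: the quantity (1 − ⟨u,v⟩)/√((1 − ‖u‖²)(1 − ‖v‖²)) is at least 1, and equals 1 exactly on the diagonal.) -/
open RealInnerProductSpace

/-- For `u, v` in the open unit disk of `ℝ²`, `(1 - ⟪u,v⟫)² ≥ (1 - ‖u‖²)(1 - ‖v‖²)`,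
with equality if and only if `u = v` (well-definedness of the Klein-model distance). -/
theorem klein_quotient_ge_one (u v : EuclideanSpace ℝ (Fin 2))
    (hu : ‖u‖ < 1) (hv : ‖v‖ < 1) :
    (1 - ‖u‖ ^ 2) * (1 - ‖v‖ ^ 2) ≤ (1 - ⟪u, v⟫) ^ 2 ∧
    ((1 - ⟪u, v⟫) ^ 2 = (1 - ‖u‖ ^ 2) * (1 - ‖v‖ ^ 2) ↔ u = v) := by
  have hd : ‖u - v‖ ^ 2 = ‖u‖ ^ 2 - 2 * ⟪u, v⟫ + ‖v‖ ^ 2 := norm_sub_sq_real u v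
  have ha : 0 < 1 - ‖u‖ ^ 2 := by nlinarith [norm_nonneg u]
  have key : (1 - ⟪u, v⟫) ^ 2 - (1 - ‖u‖ ^ 2) * (1 - ‖v‖ ^ 2)
      = (1 - ‖u‖ ^ 2) * ‖u - v‖ ^ 2 + (⟪u, v⟫ - ‖u‖ ^ 2) ^ 2 := by
    rw [hd]; ring
  have h1 : 0 ≤ (1 - ‖u‖ ^ 2) * ‖u - v‖ ^ 2 := by positivity
  have h2 := sq_nonneg (⟪u, v⟫ - ‖u‖ ^ 2)
  refine ⟨by linarith, fun h => ?_, fun h => ?_⟩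
  · have h3 : (1 - ‖u‖ ^ 2) * ‖u - v‖ ^ 2 = 0 := by linarith
    have h4 : ‖u - v‖ ^ 2 = 0 := (mul_eq_zero.mp h3).resolve_left ha.ne'
    exact sub_eq_zero.mp (norm_eq_zero.mp (pow_eq_zero_iff two_ne_zero |>.mp h4))
  · subst h
    rw [real_inner_self_eq_norm_sq]; ring
end

section
/- For all u, v in the open unit disk of ℝ², cosh(‖u − v‖) ≤ (1 − ⟨u,v⟩)/√((1 − ‖u‖²)(1 − ‖v‖²)); equivalently, the Euclidean distance ‖u − v‖ is at most the Klein-model hyperbolic distance d_K(u,v). (Claim 2 of Lemma D, hyperbolic case κ < 0: the ratio of hyperbolic distance to Euclidean distance in the Klein model is at least 1.) -/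
open RealInnerProductSpace

theorem sinh_le_mul_cosh_aux (h : ℝ) (hh : 0 ≤ h) : Real.sinh h ≤ h * Real.cosh h := by
  have hd : ∀ x : ℝ, HasDerivAt (fun x => x * Real.cosh x - Real.sinh x) (x * Real.sinh x) x := by
    intro x
    have := ((hasDerivAt_id x).mul (Real.hasDerivAt_cosh x)).sub (Real.hasDerivAt_sinh x)
    exact this.congr_deriv (by simp)
  have hm : MonotoneOn (fun x => x * Real.cosh x - Real.sinh x) (Set.Ici 0) := by
    apply monotoneOn_of_deriv_nonneg (convex_Ici 0)
    · exact fun x _ => (hd x).continuousAt.continuousWithinAt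
    · exact fun x _ => (hd x).differentiableAt.differentiableWithinAt
    · intro x hx
      rw [interior_Ici] at hx
      rw [(hd x).deriv]
      exact mul_nonneg (le_of_lt hx) (Real.sinh_nonneg_iff.2 (le_of_lt hx))
  have := hm (Set.mem_Ici.2 le_rfl) (Set.mem_Ici.2 hh) hh
  simp at this
  linarith

/-- Claim 2 of Lemma D (hyperbolic case): for `u, v` in the open unit disk of `ℝ²`,
`cosh ‖u - v‖ ≤ (1 - ⟪u,v⟫)/√((1 - ‖u‖²)(1 - ‖v‖²))`, i.e. the Euclidean distance is
at most the Klein-model hyperbolic distance. -/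
theorem cosh_dist_le_klein (u v : EuclideanSpace ℝ (Fin 2))
    (hu : ‖u‖ < 1) (hv : ‖v‖ < 1) :
    Real.cosh ‖u - v‖ ≤
      (1 - ⟪u, v⟫) / Real.sqrt ((1 - ‖u‖ ^ 2) * (1 - ‖v‖ ^ 2)) := by
  have ha : 0 < 1 - ‖u‖ ^ 2 := by nlinarith [norm_nonneg u]
  have hb : 0 < 1 - ‖v‖ ^ 2 := by nlinarith [norm_nonneg v]
  have h1 : ‖u - v‖ ^ 2 = ‖u‖ ^ 2 - 2 * ⟪u, v⟫ + ‖v‖ ^ 2 := norm_sub_sq_real u v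
  have h2 : ‖u + v‖ ^ 2 = ‖u‖ ^ 2 + 2 * ⟪u, v⟫ + ‖v‖ ^ 2 := norm_add_sq_real u v
  have h3 := sq_nonneg ‖u + v‖
  have hs : Real.sqrt ((1 - ‖u‖ ^ 2) * (1 - ‖v‖ ^ 2)) ≤ 1 - (‖u‖ ^ 2 + ‖v‖ ^ 2) / 2 := by
    apply Real.sqrt_le_iff.2
    constructor
    · linarith
    · nlinarith [sq_nonneg (‖u‖ ^ 2 - ‖v‖ ^ 2)]
  rw [le_div_iff₀ (Real.sqrt_pos.2 (mul_pos ha hb))]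
  refine (mul_le_mul_of_nonneg_left hs (Real.cosh_pos _).le).trans ?_
  obtain ⟨h, hh⟩ : ∃ h, ‖u - v‖ = 2 * h := ⟨‖u - v‖ / 2, by ring⟩
  have h0 : 0 ≤ h := by linarith [norm_nonneg (u - v)]
  have hk := sinh_le_mul_cosh_aux h h0
  have hsn := Real.sinh_nonneg_iff.2 h0
  have hsq := pow_le_pow_left₀ hsn hk 2
  rw [hh] at h1 ⊢
  have hc := Real.cosh_sq h
  have hc2 := Real.cosh_two_mul h
  rw [mul_pow, hc] at hsq
  have hle : 1 - (‖u‖ ^ 2 + ‖v‖ ^ 2) / 2 ≤ 1 - h ^ 2 := by nlinarith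
  have := mul_le_mul_of_nonneg_left hle (sq_nonneg (Real.sinh h))
  rw [hc2, hc]
  nlinarith
end

section
/- For every δ > 0 there exists ε > 0 with the following property: for all pairwise distinct u, v, w in the open unit disk of ℝ² with ‖u‖ < ε, ‖v‖ < ε, ‖w‖ < ε, setting a = d_K(u,w), b = d_K(v,u), c = d_K(v,w), the hyperbolic angle at v, defined as arccos((cosh b · cosh c − cosh a)/(sinh b · sinh c)), differs from the Euclidean angle ∠ u v w by strictly less than δ. (Claim 1 of Lemma D, hyperbolic case: near the origin the Klein model distorts angles arbitrarily little.) -/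
open RealInnerProductSpace

/-- The quantity `(1 - ⟪u,v⟫)/√((1 - ‖u‖²)(1 - ‖v‖²))`, whose `arcosh` is the
Klein-model hyperbolic distance `d_K(u,v)`:  `d_K(u,v)` is the unique `t ≥ 0` with
`cosh t = kleinQ u v`. -/
noncomputable def kleinQ (u v : EuclideanSpace ℝ (Fin 2)) : ℝ :=
  (1 - ⟪u, v⟫) / Real.sqrt ((1 - ‖u‖ ^ 2) * (1 - ‖v‖ ^ 2))

lemma kad_sinh_bound {N e p al S : ℝ} (hN : N = 1 - e) (he0 : 0 ≤ e) (he : e ≤ 1/4)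
    (hp : 0 < p) (hal : al ^ 2 ≤ e * p ^ 2) (hS : 0 ≤ S) (hS2 : S ^ 2 = N * p ^ 2 + al ^ 2) :
    N * p ≤ S ∧ S ≤ p := by
  subst hN
  constructor
  · apply abs_le_of_sq_le_sq' _ hS |>.2
    rw [hS2]
    nlinarith [sq_nonneg al, mul_nonneg (mul_nonneg he0 (by linarith : 0 ≤ 1 - e)) (sq_nonneg p)]
  · apply abs_le_of_sq_le_sq' _ hp.le |>.2
    rw [hS2]
    nlinarith

lemma kad_scalar {N e p q al be k S T : ℝ} (hN : N = 1 - e) (he0 : 0 ≤ e) (he : e ≤ 1/4)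
    (hp : 0 < p) (hq : 0 < q) (hab : |al * be| ≤ e * (p * q))
    (hk : |k| ≤ p * q)
    (h1 : N * p ≤ S) (h2 : S ≤ p) (h3 : N * q ≤ T) (h4 : T ≤ q) :
    |(N * k + al * be) / (S * T) - k / (p * q)| ≤ 8 * e := by
  have hpq : 0 < p * q := mul_pos hp hq
  have hN0 : 3/4 ≤ N := by linarith
  have hNp : 0 < N * p := by positivity
  have hNq : 0 < N * q := by positivity
  have hS : 0 < S := by linarith
  have hT : 0 < T := by linarith
  have hST1 : S * T ≤ p * q := mul_le_mul h2 h4 hT.le hp.le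
  have hST2 : (N * p) * (N * q) ≤ S * T := mul_le_mul h1 h3 hNq.le hS.le
  have hST3 : p * q * (1 - 2 * e) ≤ S * T := by
    refine le_trans ?_ hST2
    subst hN
    nlinarith [mul_nonneg hpq.le (sq_nonneg e)]
  have hST : 0 < S * T := mul_pos hS hT
  have key : (N * k + al * be) / (S * T) - k / (p * q)
      = ((p * q) * (al * be - e * k) + k * (p * q - S * T)) / ((S * T) * (p * q)) := by
    subst hN
    field_simp
    ring
  rw [key, abs_div, abs_of_pos (mul_pos hST hpq), div_le_iff₀ (mul_pos hST hpq)]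
  have a1 : |al * be - e * k| ≤ 2 * e * (p * q) := by
    have := abs_sub (al * be) (e * k)
    rw [abs_mul e k, abs_of_nonneg he0] at this
    nlinarith [mul_le_mul_of_nonneg_left hk he0]
  have a2 : |k * (p * q - S * T)| ≤ (p * q) * (2 * e * (p * q)) := by
    rw [abs_mul]
    apply mul_le_mul hk _ (abs_nonneg _) hpq.le
    rw [abs_of_nonneg (by linarith)]
    linarith
  have a3 : |(p * q) * (al * be - e * k)| ≤ (p * q) * (2 * e * (p * q)) := by
    rw [abs_mul, abs_of_pos hpq]
    exact mul_le_mul_of_nonneg_left a1 hpq.le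
  have a4 := abs_add_le ((p * q) * (al * be - e * k)) (k * (p * q - S * T))
  have a5 : p * q ≤ 2 * (S * T) := by nlinarith
  have a6 : 0 ≤ e * (p * q) := by positivity
  nlinarith [mul_le_mul_of_nonneg_left a5 a6]

lemma kad_ratio (u v w : EuclideanSpace ℝ (Fin 2)) (hu : ‖u‖ < 1) (hv : ‖v‖ ≤ 1/2) (hw : ‖w‖ < 1)
    (huv : u ≠ v) (hvw : v ≠ w) (a b c : ℝ) (hb0 : 0 ≤ b) (hc0 : 0 ≤ c)
    (ha : Real.cosh a = kleinQ u w) (hb : Real.cosh b = kleinQ v u)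
    (hc : Real.cosh c = kleinQ v w) :
    |(Real.cosh b * Real.cosh c - Real.cosh a) / (Real.sinh b * Real.sinh c)
      - ⟪u - v, w - v⟫ / (‖u - v‖ * ‖w - v‖)| ≤ 8 * ‖v‖ ^ 2 := by
  have hv0 := norm_nonneg v
  have hu0 := norm_nonneg u
  have hw0 := norm_nonneg w
  have he : ‖v‖ ^ 2 ≤ 1/4 := by nlinarith
  have hN : 0 < 1 - ‖v‖ ^ 2 := by linarith
  have hU : 0 < 1 - ‖u‖ ^ 2 := by nlinarith
  have hW : 0 < 1 - ‖w‖ ^ 2 := by nlinarith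
  unfold kleinQ at ha hb hc
  rw [Real.sqrt_mul hU.le] at ha
  rw [Real.sqrt_mul hN.le] at hb hc
  obtain ⟨n, hn⟩ : ∃ n, n = √(1 - ‖v‖ ^ 2) := ⟨_, rfl⟩
  obtain ⟨m, hm⟩ : ∃ n, n = √(1 - ‖u‖ ^ 2) := ⟨_, rfl⟩
  obtain ⟨l, hl⟩ : ∃ n, n = √(1 - ‖w‖ ^ 2) := ⟨_, rfl⟩
  have hn0 : 0 < n := hn ▸ Real.sqrt_pos.2 hN
  have hm0 : 0 < m := hm ▸ Real.sqrt_pos.2 hU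
  have hl0 : 0 < l := hl ▸ Real.sqrt_pos.2 hW
  have hn2 : n ^ 2 = 1 - ‖v‖ ^ 2 := by rw [hn]; exact Real.sq_sqrt hN.le
  have hm2 : m ^ 2 = 1 - ‖u‖ ^ 2 := by rw [hm]; exact Real.sq_sqrt hU.le
  have hl2 : l ^ 2 = 1 - ‖w‖ ^ 2 := by rw [hl]; exact Real.sq_sqrt hW.le
  rw [← hm, ← hl] at ha
  rw [← hn, ← hm] at hb
  rw [← hn, ← hl] at hc
  have hp : 0 < ‖u - v‖ := norm_pos_iff.2 (sub_ne_zero.2 huv)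
  have hq : 0 < ‖w - v‖ := norm_pos_iff.2 (sub_ne_zero.2 hvw.symm)
  have eal : ⟪v, u - v⟫ = ⟪v, u⟫ - ‖v‖ ^ 2 := by
    rw [inner_sub_right, real_inner_self_eq_norm_sq]
  have ebe : ⟪v, w - v⟫ = ⟪v, w⟫ - ‖v‖ ^ 2 := by
    rw [inner_sub_right, real_inner_self_eq_norm_sq]
  have ek : ⟪u - v, w - v⟫ = ⟪u, w⟫ - ⟪v, u⟫ - ⟪v, w⟫ + ‖v‖ ^ 2 := by
    rw [inner_sub_right, inner_sub_left, inner_sub_left, real_inner_self_eq_norm_sq,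
      real_inner_comm v u]
    ring
  have ep : ‖u - v‖ ^ 2 = ‖u‖ ^ 2 - 2 * ⟪v, u⟫ + ‖v‖ ^ 2 := by
    rw [norm_sub_sq_real, real_inner_comm]
  have eq : ‖w - v‖ ^ 2 = ‖w‖ ^ 2 - 2 * ⟪v, w⟫ + ‖v‖ ^ 2 := by
    rw [norm_sub_sq_real, real_inner_comm]
  have cal : |⟪v, u - v⟫| ≤ ‖v‖ * ‖u - v‖ := abs_real_inner_le_norm _ _
  have cbe : |⟪v, w - v⟫| ≤ ‖v‖ * ‖w - v‖ := abs_real_inner_le_norm _ _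
  have ck : |⟪u - v, w - v⟫| ≤ ‖u - v‖ * ‖w - v‖ := abs_real_inner_le_norm _ _
  have hal2 : ⟪v, u - v⟫ ^ 2 ≤ ‖v‖ ^ 2 * ‖u - v‖ ^ 2 := by
    rw [← mul_pow, ← sq_abs]; exact pow_le_pow_left₀ (abs_nonneg _) cal 2
  have hbe2 : ⟪v, w - v⟫ ^ 2 ≤ ‖v‖ ^ 2 * ‖w - v‖ ^ 2 := by
    rw [← mul_pow, ← sq_abs]; exact pow_le_pow_left₀ (abs_nonneg _) cbe 2
  have hab : |⟪v, u - v⟫ * ⟪v, w - v⟫| ≤ ‖v‖ ^ 2 * (‖u - v‖ * ‖w - v‖) := by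
    rw [abs_mul]
    calc _ ≤ (‖v‖ * ‖u - v‖) * (‖v‖ * ‖w - v‖) :=
          mul_le_mul cal cbe (abs_nonneg _) (by positivity)
      _ = _ := by ring
  have hS : 0 ≤ Real.sinh b * (n * m) :=
    mul_nonneg (Real.sinh_nonneg_iff.2 hb0) (by positivity)
  have hT : 0 ≤ Real.sinh c * (n * l) :=
    mul_nonneg (Real.sinh_nonneg_iff.2 hc0) (by positivity)
  have hb' : Real.cosh b * (n * m) = 1 - ⟪v, u⟫ := by rw [hb]; field_simp
  have hc' : Real.cosh c * (n * l) = 1 - ⟪v, w⟫ := by rw [hc]; field_simp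
  have ha' : Real.cosh a * (m * l) = 1 - ⟪u, w⟫ := by rw [ha]; field_simp
  have hS2 : (Real.sinh b * (n * m)) ^ 2
      = (1 - ‖v‖ ^ 2) * ‖u - v‖ ^ 2 + ⟪v, u - v⟫ ^ 2 := by
    have : (Real.sinh b * (n * m)) ^ 2 = (Real.cosh b * (n * m)) ^ 2 - n ^ 2 * m ^ 2 := by
      rw [mul_pow, Real.sinh_sq]; ring
    rw [this, hb', hn2, hm2, ep, eal]; ring
  have hT2 : (Real.sinh c * (n * l)) ^ 2
      = (1 - ‖v‖ ^ 2) * ‖w - v‖ ^ 2 + ⟪v, w - v⟫ ^ 2 := by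
    have : (Real.sinh c * (n * l)) ^ 2 = (Real.cosh c * (n * l)) ^ 2 - n ^ 2 * l ^ 2 := by
      rw [mul_pow, Real.sinh_sq]; ring
    rw [this, hc', hn2, hl2, eq, ebe]; ring
  obtain ⟨h1, h2⟩ := kad_sinh_bound rfl (sq_nonneg ‖v‖) he hp hal2 hS hS2
  obtain ⟨h3, h4⟩ := kad_sinh_bound rfl (sq_nonneg ‖v‖) he hq hbe2 hT hT2
  have main := kad_scalar rfl (sq_nonneg ‖v‖) he hp hq hab ck h1 h2 h3 h4
  have num : (1 - ‖v‖ ^ 2) * ⟪u - v, w - v⟫ + ⟪v, u - v⟫ * ⟪v, w - v⟫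
      = (Real.cosh b * Real.cosh c - Real.cosh a) * (n ^ 2 * (m * l)) := by
    have : (Real.cosh b * Real.cosh c - Real.cosh a) * (n ^ 2 * (m * l))
      = (Real.cosh b * (n * m)) * (Real.cosh c * (n * l)) - n ^ 2 * (Real.cosh a * (m * l)) := by
      ring
    rw [this, ha', hb', hc', hn2, ek, eal, ebe]; ring
  have den : (Real.sinh b * (n * m)) * (Real.sinh c * (n * l))
      = (Real.sinh b * Real.sinh c) * (n ^ 2 * (m * l)) := by ring
  rw [num, den, mul_div_mul_right _ _ (by positivity)] at main
  exact main

/-- Claim 1 of Lemma D (hyperbolic case): for every `δ > 0` there is `ε > 0` such that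
for pairwise distinct `u, v, w` in the open unit disk with norms `< ε`, the hyperbolic
angle at `v` (computed by the hyperbolic law of cosines from the Klein distances
`a = d_K(u,w)`, `b = d_K(v,u)`, `c = d_K(v,w)`, the unique nonnegative numbers whose
`cosh` equals the corresponding `kleinQ`) differs from the Euclidean angle `∠ u v w`
by strictly less than `δ`. -/
theorem klein_angle_distortion (δ : ℝ) (hδ : 0 < δ) :
    ∃ ε > 0, ∀ u v w : EuclideanSpace ℝ (Fin 2),
      ‖u‖ < 1 → ‖v‖ < 1 → ‖w‖ < 1 → ‖u‖ < ε → ‖v‖ < ε → ‖w‖ < ε →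
      u ≠ v → v ≠ w → u ≠ w →
      ∀ a b c : ℝ, 0 ≤ a → 0 ≤ b → 0 ≤ c →
        Real.cosh a = kleinQ u w → Real.cosh b = kleinQ v u → Real.cosh c = kleinQ v w →
        |Real.arccos ((Real.cosh b * Real.cosh c - Real.cosh a) /
            (Real.sinh b * Real.sinh c)) -
          EuclideanGeometry.angle u v w| < δ := by
  have huc : UniformContinuousOn Real.arccos (Set.Icc (-3) 3) :=
    isCompact_Icc.uniformContinuousOn_of_continuous Real.continuous_arccos.continuousOn
  obtain ⟨η, hη, H⟩ := Metric.uniformContinuousOn_iff.1 huc δ hδ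
  refine ⟨min (1/2) (η / 8), by positivity, ?_⟩
  intro u v w hu _ hw _ hve _ huv hvw _ a b c _ hb0 hc0 ha hb hc
  have hv1 : ‖v‖ < 1/2 := lt_of_lt_of_le hve (min_le_left _ _)
  have hv2 : ‖v‖ < η / 8 := lt_of_lt_of_le hve (min_le_right _ _)
  have hv0 := norm_nonneg v
  have key := kad_ratio u v w hu hv1.le hw huv hvw a b c hb0 hc0 ha hb hc
  have ht := abs_le.1 (abs_real_inner_div_norm_mul_norm_le_one (u - v) (w - v))
  have hd : 8 * ‖v‖ ^ 2 < η := by nlinarith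
  have hd2 : 8 * ‖v‖ ^ 2 ≤ 2 := by nlinarith
  have hr := abs_le.1 key
  have := H _ ⟨by linarith, by linarith⟩ (⟪u - v, w - v⟫ / (‖u - v‖ * ‖w - v‖))
    ⟨by linarith, by linarith⟩ (lt_of_le_of_lt key hd)
  exact this
end

section
/- Let a, b, c be the side lengths of a spherical triangle on the unit sphere: 0 < b < π, 0 < c < π, 0 ≤ a ≤ π, |b − c| ≤ a ≤ b + c, and a + b + c ≤ 2π. Then (cos a − cos b · cos c)/(sin b · sin c) ≤ (b² + c² − a²)/(2bc); equivalently, the spherical angle opposite the side of length a is at least the corresponding angle of the Euclidean comparison triangle with the same side lengths. (The comparison-angle monotonicity used in Lemma 4.1: in the spherical case, Euclidean comparison angles are smaller than the original angles.) -/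
open Real

theorem aux_sin_ratio (u b : ℝ) (hu : 0 ≤ u) (hub : u ≤ b) (hb : 0 < b) (hbπ : b < π) :
    u * Real.sin b ≤ b * Real.sin u := by
  have hq : u / b ≤ 1 := (div_le_one hb).2 hub
  have h0 : (0 : ℝ) ∈ Set.Icc 0 π := ⟨le_refl _, Real.pi_pos.le⟩
  have hb' : b ∈ Set.Icc 0 π := ⟨hb.le, hbπ.le⟩
  have g1 : 0 ≤ 1 - u / b := by linarith
  have g2 : 0 ≤ u / b := by positivity
  have h := strictConcaveOn_sin_Icc.concaveOn.2 h0 hb' g1 g2 (by ring)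
  simp only [smul_eq_mul, Real.sin_zero, mul_zero, zero_add] at h
  rw [div_mul_cancel₀ _ hb.ne'] at h
  calc u * Real.sin b = b * (u / b * Real.sin b) := by field_simp
    _ ≤ _ := mul_le_mul_of_nonneg_left h hb.le

/-- Comparison-angle monotonicity (spherical case): for the side lengths `a, b, c` of a
spherical triangle on the unit sphere, the cosine of the spherical angle opposite `a`
is at most the cosine of the corresponding Euclidean comparison angle; equivalently,
the spherical angle is at least the Euclidean comparison angle. -/
theorem spherical_cos_angle_le_euclidean (a b c : ℝ)
    (hb0 : 0 < b) (hbπ : b < π) (hc0 : 0 < c) (hcπ : c < π)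
    (ha0 : 0 ≤ a) (haπ : a ≤ π)
    (h1 : |b - c| ≤ a) (h2 : a ≤ b + c) (h3 : a + b + c ≤ 2 * π) :
    (Real.cos a - Real.cos b * Real.cos c) / (Real.sin b * Real.sin c) ≤
      (b ^ 2 + c ^ 2 - a ^ 2) / (2 * b * c) := by
  obtain ⟨h4, h5⟩ := abs_le.1 h1
  obtain ⟨u, hu⟩ : ∃ u, u = (a + b - c) / 2 := ⟨_, rfl⟩
  obtain ⟨v, hv⟩ : ∃ v, v = (a - b + c) / 2 := ⟨_, rfl⟩
  have hu0 : 0 ≤ u := by linarith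
  have hv0 : 0 ≤ v := by linarith
  have hsb := Real.sin_pos_of_pos_of_lt_pi hb0 hbπ
  have hsc := Real.sin_pos_of_pos_of_lt_pi hc0 hcπ
  have k1 := aux_sin_ratio u b hu0 (by linarith) hb0 hbπ
  have k2 := aux_sin_ratio v c hv0 (by linarith) hc0 hcπ
  have k := mul_le_mul k1 k2 (by positivity) (le_trans (by positivity) k1)
  have e : Real.cos a = Real.cos b * Real.cos c + Real.sin b * Real.sin c
      - 2 * (Real.sin u * Real.sin v) := by
    have e1 : Real.cos a = Real.cos (u + v) := by congr 1; linarith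
    have e2 : Real.cos (b - c) = Real.cos (u - v) := by congr 1; linarith
    rw [Real.cos_sub, Real.cos_sub] at e2
    rw [e1, Real.cos_add]
    linarith
  have e' : b ^ 2 + c ^ 2 - a ^ 2 = 2 * b * c - 4 * (u * v) := by
    rw [hu, hv]; ring
  rw [e, e', div_le_div_iff₀ (by positivity) (by positivity)]
  linarith
end

section
/- Let δ > 0 and let a, b, c > 0 satisfy the strict triangle inequalities a < b + c, b < a + c, c < a + b. Suppose every angle of the hyperbolic triangle with side lengths a, b, c is strictly greater than δ, where the angle opposite the side a is arccos((cosh b cosh c − cosh a)/(sinh b sinh c)) and similarly for the other two. Then every angle of the Euclidean comparison triangle, i.e. arccos((b² + c² − a²)/(2bc)) and its two analogues, lies in the open interval (δ, π − 2δ). (Lemma 4.1 of the paper in the hyperbolic case, for a single triangle: angle bounds pass from a hyperbolic triangle to its Euclidean comparison triangle.) -/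
open Real

lemma sinh_slope {x b : ℝ} (hx : 0 < x) (hxb : x ≤ b) : Real.sinh x * b ≤ Real.sinh b * x := by
  have hconv : ConvexOn ℝ (Set.Ici (0:ℝ)) Real.sinh := by
    apply MonotoneOn.convexOn_of_deriv (convex_Ici 0) Real.continuous_sinh.continuousOn
      Real.differentiable_sinh.differentiableOn
    rw [Real.deriv_sinh, interior_Ici]
    intro u hu v hv huv
    rw [Real.cosh_le_cosh, abs_of_pos hu, abs_of_pos hv]
    exact huv
  have hb : 0 < b := lt_of_lt_of_le hx hxb
  have h := hconv.2 (Set.mem_Ici.2 le_rfl) (Set.mem_Ici.2 hb.le)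
    (show 0 ≤ 1 - x / b by rw [sub_nonneg, div_le_one hb]; exact hxb)
    (show 0 ≤ x / b by positivity) (by ring)
  simp only [smul_eq_mul, mul_zero, zero_add, Real.sinh_zero] at h
  rw [div_mul_cancel₀ _ hb.ne'] at h
  calc Real.sinh x * b ≤ (x / b * Real.sinh b) * b := by gcongr
    _ = Real.sinh b * x := by field_simp

lemma cos_compare {a b c : ℝ} (hb : 0 < b) (hc : 0 < c)
    (tab : a < b + c) (tbc : b < a + c) (tca : c < a + b) :
    (b ^ 2 + c ^ 2 - a ^ 2) / (2 * b * c) ≤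
    (Real.cosh b * Real.cosh c - Real.cosh a) / (Real.sinh b * Real.sinh c) := by
  obtain ⟨x, hx⟩ : ∃ x, x = (a + b - c) / 2 := ⟨_, rfl⟩
  obtain ⟨y, hy⟩ : ∃ y, y = (a + c - b) / 2 := ⟨_, rfl⟩
  have hx0 : 0 < x := by linarith
  have hy0 : 0 < y := by linarith
  have h1 := sinh_slope hx0 (show x ≤ b by linarith)
  have h2 := sinh_slope hy0 (show y ≤ c by linarith)
  have sx := Real.sinh_pos_iff.2 hx0
  have sy := Real.sinh_pos_iff.2 hy0
  have sb := Real.sinh_pos_iff.2 hb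
  have sc := Real.sinh_pos_iff.2 hc
  have h3 : (Real.sinh x * b) * (Real.sinh y * c) ≤ (Real.sinh b * x) * (Real.sinh c * y) :=
    mul_le_mul h1 h2 (by positivity) (by positivity)
  have ea : Real.cosh a = Real.cosh b * Real.cosh c - Real.sinh b * Real.sinh c
      + 2 * (Real.sinh x * Real.sinh y) := by
    have e1 : a = x + y := by rw [hx, hy]; ring
    have e2 := Real.cosh_sub b c
    have e3 : b - c = x - y := by rw [hx, hy]; ring
    rw [e3, Real.cosh_sub] at e2
    rw [e1, Real.cosh_add]
    linarith
  have e4 : b ^ 2 + c ^ 2 - a ^ 2 = 2 * b * c - 4 * (x * y) := by rw [hx, hy]; ring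
  rw [ea, e4, div_le_div_iff₀ (by positivity) (by positivity)]
  nlinarith

lemma angle_sum {a b c : ℝ} (ha : 0 < a) (hb : 0 < b) (hc : 0 < c)
    (tab : a < b + c) (tbc : b < a + c) (tca : c < a + b) :
    Real.arccos ((b ^ 2 + c ^ 2 - a ^ 2) / (2 * b * c)) +
    Real.arccos ((a ^ 2 + c ^ 2 - b ^ 2) / (2 * a * c)) +
    Real.arccos ((a ^ 2 + b ^ 2 - c ^ 2) / (2 * a * b)) = π := by
  have hK : 0 ≤ (a + b + c) * (b + c - a) * (a + c - b) * (a + b - c) := by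
    have := sub_pos.2 tab
    have := sub_pos.2 tbc
    have := sub_pos.2 tca
    positivity
  obtain ⟨K, hKd⟩ : ∃ K, K = √((a + b + c) * (b + c - a) * (a + c - b) * (a + b - c)) := ⟨_, rfl⟩
  have hK0 : 0 ≤ K := hKd ▸ Real.sqrt_nonneg _
  have hK2 : K ^ 2 = (a + b + c) * (b + c - a) * (a + c - b) * (a + b - c) := by
    rw [hKd, Real.sq_sqrt hK]
  obtain ⟨x, hx⟩ : ∃ x, x = (b ^ 2 + c ^ 2 - a ^ 2) / (2 * b * c) := ⟨_, rfl⟩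
  obtain ⟨y, hy⟩ : ∃ y, y = (a ^ 2 + c ^ 2 - b ^ 2) / (2 * a * c) := ⟨_, rfl⟩
  obtain ⟨z, hz⟩ : ∃ z, z = (a ^ 2 + b ^ 2 - c ^ 2) / (2 * a * b) := ⟨_, rfl⟩
  rw [← hx, ← hy, ← hz]
  have ex : 1 - x ^ 2 = (K / (2 * b * c)) ^ 2 := by
    rw [div_pow, hK2, hx]; field_simp; ring
  have ey : 1 - y ^ 2 = (K / (2 * a * c)) ^ 2 := by
    rw [div_pow, hK2, hy]; field_simp; ring
  have bx : |x| ≤ 1 := by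
    rw [← sq_le_one_iff_abs_le_one]; nlinarith [sq_nonneg (K / (2 * b * c))]
  have by' : |y| ≤ 1 := by
    rw [← sq_le_one_iff_abs_le_one]; nlinarith [sq_nonneg (K / (2 * a * c))]
  rw [abs_le] at bx by'
  have hcos : Real.cos (Real.arccos x + Real.arccos y) = -z := by
    rw [Real.cos_add, Real.cos_arccos bx.1 bx.2, Real.cos_arccos by'.1 by'.2,
      Real.sin_arccos, Real.sin_arccos, ex, ey, Real.sqrt_sq (by positivity),
      Real.sqrt_sq (by positivity)]
    have : K / (2 * b * c) * (K / (2 * a * c)) = K ^ 2 / ((2 * b * c) * (2 * a * c)) := by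
      rw [div_mul_div_comm, sq]
    rw [this, hK2, hx, hy, hz]
    field_simp
    ring
  have hle : Real.arccos x + Real.arccos y ≤ π := by
    have hxy : -y ≤ x := by
      have : x + y = (a + b) * ((c + a - b) * (c + b - a)) / (2 * a * b * c) := by
        rw [hx, hy]; field_simp; ring
      have : 0 ≤ x + y := by
        rw [this]
        have : 0 < c + a - b := by linarith
        have : 0 < c + b - a := by linarith
        positivity
      linarith
    have := Real.arccos_le_arccos hxy
    rw [Real.arccos_neg] at this
    linarith
  have h := Real.arccos_cos (add_nonneg (Real.arccos_nonneg x) (Real.arccos_nonneg y)) hle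
  rw [hcos, Real.arccos_neg] at h
  linarith


/-- Lemma 4.1 (hyperbolic case, single triangle): if every angle of the hyperbolic
triangle with side lengths `a, b, c` is strictly greater than `δ`, then every angle of
the Euclidean comparison triangle lies in the open interval `(δ, π - 2δ)`. -/
theorem comparison_angles_in_Ioo (δ a b c : ℝ) (hδ : 0 < δ)
    (ha : 0 < a) (hb : 0 < b) (hc : 0 < c)
    (tab : a < b + c) (tbc : b < a + c) (tca : c < a + b)
    (hA : δ < Real.arccos ((Real.cosh b * Real.cosh c - Real.cosh a) /
        (Real.sinh b * Real.sinh c)))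
    (hB : δ < Real.arccos ((Real.cosh a * Real.cosh c - Real.cosh b) /
        (Real.sinh a * Real.sinh c)))
    (hC : δ < Real.arccos ((Real.cosh a * Real.cosh b - Real.cosh c) /
        (Real.sinh a * Real.sinh b))) :
    Real.arccos ((b ^ 2 + c ^ 2 - a ^ 2) / (2 * b * c)) ∈ Set.Ioo δ (π - 2 * δ) ∧
    Real.arccos ((a ^ 2 + c ^ 2 - b ^ 2) / (2 * a * c)) ∈ Set.Ioo δ (π - 2 * δ) ∧
    Real.arccos ((a ^ 2 + b ^ 2 - c ^ 2) / (2 * a * b)) ∈ Set.Ioo δ (π - 2 * δ) := by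
  have h1 := lt_of_lt_of_le hA (Real.arccos_le_arccos (cos_compare hb hc tab tbc tca))
  have h2 := lt_of_lt_of_le hB
    (Real.arccos_le_arccos (cos_compare (a := b) (b := a) ha hc tbc tab (by linarith)))
  have h3 := lt_of_lt_of_le hC
    (Real.arccos_le_arccos (cos_compare (a := c) (b := a) (c := b) ha hb tca
      (by linarith) (by linarith)))
  have hs := angle_sum ha hb hc tab tbc tca
  refine ⟨⟨h1, ?_⟩, ⟨h2, ?_⟩, ⟨h3, ?_⟩⟩ <;> linarith
end
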